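/- Let (N, B, L) be a Hadamard triple in ℝ with #B < N, and let μ_{N,B} be the self-similar measure associated with (N,B), i.e., the unique Borel probability measure μ on ℝ satisfying μ = (1/#B) ∑_{b∈B} μ ∘ τ_b^{-1} where τ_b(x) = (x+b)/N. Then every rational number t of the form t = v/u with u, v ∈ ℕ, gcd(u,v) = 1, and gcd(uv, N) = 1 is a spectral eigenvalue of μ_{N,B}; that is, there exists Λ ⊂ ℝ such that both Λ and t·Λ are spectra of μ_{N,B}. -/

import Mathlib

open MeasureTheory ENNReal

/-- `(N,B,L)` is a Hadamard triple in `ℝ`. -/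
def IsHadamardTriple (N : ℕ) (B L : Finset ℤ) : Prop :=
  2 ≤ N ∧ 2 ≤ B.card ∧ B.card = L.card ∧
    ∀ l ∈ L, ∀ l' ∈ L, l ≠ l' →
      ∑ b ∈ B, Complex.exp (2 * Real.pi * Complex.I * (b : ℂ) * ((l : ℂ) - (l' : ℂ)) / (N : ℂ)) = 0

/-- The exponential function `e_λ(x) = e^{2πiλx}`. -/
noncomputable def expFun (l : ℝ) : ℝ → ℂ :=
  fun x => Complex.exp (2 * Real.pi * Complex.I * (l : ℂ) * (x : ℂ))

/-- `Λ` is a spectrum of `μ`: the family `{e^{2πiλx} : λ ∈ Λ}` forms an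
orthonormal basis of `L²(μ)`. -/
def IsSpectrum (μ : Measure ℝ) (Λ : Set ℝ) : Prop :=
  ∃ F : Λ → Lp ℂ 2 μ,
    (∀ l : Λ, (F l : ℝ → ℂ) =ᵐ[μ] expFun (l : ℝ)) ∧
    Orthonormal ℂ F ∧
    (Submodule.span ℂ (Set.range F)).topologicalClosure = ⊤


noncomputable def MB (B : Finset ℤ) (x : ℝ) : ℂ :=
  (B.card : ℂ)⁻¹ * ∑ b ∈ B, Complex.exp (2 * Real.pi * Complex.I * (b : ℂ) * (x : ℂ))

noncomputable def PB (N : ℕ) (B : Finset ℤ) (n : ℕ) (x : ℝ) : ℂ :=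
  ∏ k ∈ Finset.range n, MB B (x / (N : ℝ) ^ (k + 1))

noncomputable def phi (μ : Measure ℝ) (x : ℝ) : ℂ := ∫ t, expFun x t ∂μ

lemma MB_add_int (B : Finset ℤ) (x : ℝ) (j : ℤ) : MB B (x + j) = MB B x := by
  unfold MB
  congr 1
  refine Finset.sum_congr rfl fun b _ => ?_
  rw [Complex.exp_eq_exp_iff_exists_int]
  refine ⟨b * j, ?_⟩
  push_cast
  ring

lemma MB_zero (B : Finset ℤ) (hB : 2 ≤ B.card) : MB B 0 = 1 := by
  unfold MB
  have : (B.card : ℂ) ≠ 0 := by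
    have : B.card ≠ 0 := by omega
    exact_mod_cast this
  simp [this]

lemma PB_zero (N : ℕ) (B : Finset ℤ) (hB : 2 ≤ B.card) (n : ℕ) : PB N B n 0 = 1 := by
  unfold PB
  simp [MB_zero B hB]

lemma PB_add (N : ℕ) (B : Finset ℤ) (n m : ℕ) (x : ℝ) :
    PB N B (n + m) x = PB N B n x * PB N B m (x / (N : ℝ) ^ n) := by
  unfold PB
  rw [Finset.prod_range_add]
  congr 1
  refine Finset.prod_congr rfl fun k _ => ?_
  rw [div_div, ← pow_add]
  congr 2

lemma PB_periodic (N : ℕ) (hN : 2 ≤ N) (B : Finset ℤ) (n : ℕ) (x : ℝ) (j : ℤ) :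
    PB N B n (x + (N : ℝ) ^ n * j) = PB N B n x := by
  unfold PB
  refine Finset.prod_congr rfl fun k hk => ?_
  have hk : k < n := Finset.mem_range.mp hk
  have h0 : (N : ℝ) ≠ 0 := by
    have : N ≠ 0 := by omega
    exact_mod_cast this
  obtain ⟨r, rfl⟩ : ∃ r, n = (k + 1) + r := ⟨n - (k + 1), by omega⟩
  rw [← MB_add_int B (x / (N : ℝ) ^ (k + 1)) ((N : ℤ) ^ r * j)]
  congr 1
  push_cast
  rw [pow_add (N : ℝ) (k + 1) r]
  field_simp

def Lev (N : ℕ) (B : Finset ℤ) (W : Finset ℕ) (n : ℕ) (D : Finset ℤ) : Prop :=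
  ∀ w ∈ W, ∀ ξ : ℝ, ∑ d ∈ D, ‖PB N B n (ξ + w * d)‖ ^ 2 = 1

lemma Lev.orth {N : ℕ} {B : Finset ℤ} (hB : 2 ≤ B.card) {W : Finset ℕ} {n : ℕ}
    {D : Finset ℤ} (h : Lev N B W n D) {w : ℕ} (hw : w ∈ W) {d d' : ℤ} (hd : d ∈ D)
    (hd' : d' ∈ D) (hne : d ≠ d') : PB N B n (w * (d - d')) = 0 := by
  have h1 := h w hw (-(w * d'))
  rw [← Finset.add_sum_erase _ _ hd'] at h1
  have h2 : -((w : ℝ) * d') + w * d' = 0 := by ring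
  rw [h2, PB_zero N B hB] at h1
  have h3 : ∑ d ∈ D.erase d', ‖PB N B n (-((w : ℝ) * d') + w * d)‖ ^ 2 = 0 := by
    simpa using h1
  rw [Finset.sum_eq_zero_iff_of_nonneg (fun _ _ => by positivity)] at h3
  have h4 := h3 d (Finset.mem_erase.mpr ⟨hne, hd⟩)
  have h5 : -((w : ℝ) * d') + w * d = w * (d - d') := by ring
  rw [h5] at h4
  simpa using h4

lemma Lev.comp {N : ℕ} (hN : 2 ≤ N) {B : Finset ℤ} (hB : 2 ≤ B.card) {W : Finset ℕ} {n m : ℕ}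
    {G : Finset ℤ} (h : Lev N B W n G) (D : ℤ → Finset ℤ) (hD : ∀ g ∈ G, Lev N B W m (D g)) :
    Lev N B W (n + m) (G.biUnion fun g => (D g).image (fun d => g + (N : ℤ) ^ n * d)) := by
  intro w hw ξ
  have hN0 : (N : ℝ) ≠ 0 := by
    have : N ≠ 0 := by omega
    exact_mod_cast this
  have hNZ : (N : ℤ) ≠ 0 := by
    have : N ≠ 0 := by omega
    exact_mod_cast this
  rw [Finset.sum_biUnion]
  · rw [← h w hw ξ]
    refine Finset.sum_congr rfl fun g hg => ?_
    rw [Finset.sum_image]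
    · have key : ∀ d : ℤ, ‖PB N B (n + m) (ξ + w * ((g + (N : ℤ) ^ n * d : ℤ) : ℝ))‖ ^ 2
          = ‖PB N B n (ξ + w * g)‖ ^ 2 *
            ‖PB N B m ((ξ + w * g) / (N : ℝ) ^ n + w * d)‖ ^ 2 := by
        intro d
        rw [PB_add, norm_mul, mul_pow]
        congr 3
        · rw [← PB_periodic N hN B n (ξ + w * g) (w * d)]
          congr 1
          push_cast
          ring
        · congr 1
          push_cast
          field_simp
          ring
      rw [Finset.sum_congr rfl (fun d _ => key d), ← Finset.mul_sum, hD g hg w hw, mul_one]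
    · intro d _ d' _ hdd
      have : (N : ℤ) ^ n ≠ 0 := pow_ne_zero _ hNZ
      simpa [this] using hdd
  · intro g hg g' hg' hne
    rw [Function.onFun, Finset.disjoint_left]
    intro a ha ha'
    simp only [Finset.mem_image] at ha ha'
    obtain ⟨d, _, rfl⟩ := ha
    obtain ⟨d', _, hd'⟩ := ha'
    have h1 := h.orth hB hw hg hg' hne
    have h2 : (w : ℝ) * (g - g') = 0 + (N : ℝ) ^ n * ((w * (d' - d) : ℤ) : ℝ) := by
      have : (g : ℝ) - g' = (N : ℝ) ^ n * (d' - d) := by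
        have : g - g' = (N : ℤ) ^ n * (d' - d) := by linarith
        exact_mod_cast this
      rw [this]
      push_cast
      ring
    rw [h2, PB_periodic N hN, PB_zero N B hB] at h1
    exact one_ne_zero h1

lemma Lev.single (N : ℕ) (B : Finset ℤ) (W : Finset ℕ) (t : ℤ) : Lev N B W 0 {t} := by
  intro w _ ξ
  simp [PB]

lemma Lev.translate {N : ℕ} (hN : 2 ≤ N) {B : Finset ℤ} (hB : 2 ≤ B.card) {W : Finset ℕ} {n : ℕ}
    {D : Finset ℤ} (h : Lev N B W n D) (t : ℤ) : Lev N B W n (D.image fun d => t + d) := by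
  have := (Lev.single N B W t).comp hN hB (fun _ => D) (fun _ _ => h)
  simpa using this

lemma Lev.adjust {N : ℕ} (hN : 2 ≤ N) {B : Finset ℤ} (hB : 2 ≤ B.card) {W : Finset ℕ} {n : ℕ}
    {D : Finset ℤ} (h : Lev N B W n D) (j : ℤ → ℤ) :
    Lev N B W n (D.image fun d => d + (N : ℤ) ^ n * j d) := by
  have := h.comp hN hB (fun d => {j d}) (fun _ _ => Lev.single N B W _)
  rw [add_zero] at this
  convert this using 1
  ext x
  simp [eq_comm]

lemma Lev.pow {N : ℕ} (hN : 2 ≤ N) {B : Finset ℤ} (hB : 2 ≤ B.card) {W : Finset ℕ}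
    {L : Finset ℤ} (h : Lev N B W 1 L) (h0 : (0 : ℤ) ∈ L) (m : ℕ) :
    ∃ D : Finset ℤ, Lev N B W m D ∧ 0 ∈ D ∧ D.card ≤ L.card ^ m := by
  induction m with
  | zero => exact ⟨{0}, Lev.single N B W 0, by simp, by simp⟩
  | succ m ih =>
    obtain ⟨D, hD, hD0, hc⟩ := ih
    refine ⟨_, hD.comp hN hB (fun _ => L) (fun _ _ => h), ?_, ?_⟩
    · simp only [Finset.mem_biUnion, Finset.mem_image]
      exact ⟨0, hD0, 0, h0, by simp⟩
    · refine Finset.card_biUnion_le.trans ?_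
      calc _ ≤ ∑ _g ∈ D, L.card := Finset.sum_le_sum fun _ _ => Finset.card_image_le
        _ = D.card * L.card := by simp
        _ ≤ _ := by rw [pow_succ]; exact Nat.mul_le_mul_right _ hc

lemma MB_eq_zero_iff (B : Finset ℤ) (hB : 2 ≤ B.card) (x : ℝ) :
    MB B x = 0 ↔ ∑ b ∈ B, Complex.exp (2 * Real.pi * Complex.I * (b : ℂ) * (x : ℂ)) = 0 := by
  have : (B.card : ℂ) ≠ 0 := by
    have : B.card ≠ 0 := by omega
    exact_mod_cast this
  unfold MB
  simp [this]

lemma MB_galois (B : Finset ℤ) (hB : 2 ≤ B.card) (n : ℕ) (hn : 0 < n) (u : ℕ)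
    (hu : Nat.Coprime u n) (c : ℤ) (h : MB B ((c : ℝ) / n) = 0) :
    MB B (u * ((c : ℝ) / n)) = 0 := by
  rw [MB_eq_zero_iff B hB] at h ⊢
  have hn0 : (n : ℂ) ≠ 0 := by exact_mod_cast hn.ne'
  set ζ : ℂ := Complex.exp (2 * Real.pi * Complex.I * (c / n)) with hζ
  have hζn : ζ ^ n = 1 := by
    rw [hζ, ← Complex.exp_nat_mul, Complex.exp_eq_one_iff]
    refine ⟨c, ?_⟩
    field_simp
  have hprim := IsPrimitiveRoot.orderOf ζ
  have hdvd : orderOf ζ ∣ n := orderOf_dvd_of_pow_eq_one hζn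
  have hcop : Nat.Coprime u (orderOf ζ) := Nat.Coprime.coprime_dvd_right hdvd hu
  have hq : 0 < orderOf ζ := Nat.pos_of_dvd_of_pos hdvd hn
  set k : ℕ := ∑ b ∈ B, b.natAbs with hk
  have hle : ∀ b ∈ B, 0 ≤ b + k := by
    intro b hb
    have : b.natAbs ≤ k := Finset.single_le_sum (f := fun b : ℤ => b.natAbs)
      (fun _ _ => Nat.zero_le _) hb
    omega
  let p : Polynomial ℤ := ∑ b ∈ B, Polynomial.X ^ (b + k).toNat
  have hp : ∀ z : ℂ, Polynomial.aeval z p = ∑ b ∈ B, z ^ (b + k).toNat := by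
    intro z
    simp [p]
  have hz : ∀ r : ℕ, (ζ ^ r) ^ k * ∑ b ∈ B, Complex.exp (2 * Real.pi * Complex.I * (b : ℂ) *
      ((r * ((c : ℝ) / n) : ℝ) : ℂ)) = Polynomial.aeval (ζ ^ r) p := by
    intro r
    rw [hp, Finset.mul_sum]
    refine Finset.sum_congr rfl fun b hb => ?_
    have h1 : (((b + k).toNat : ℕ) : ℂ) = b + k := by
      have := Int.toNat_of_nonneg (hle b hb)
      exact_mod_cast congrArg (Int.cast : ℤ → ℂ) this
    rw [hζ]
    simp only [← Complex.exp_nat_mul]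
    rw [← Complex.exp_add, h1]
    congr 1
    push_cast
    ring
  have h1 : Polynomial.aeval ζ p = 0 := by
    have := hz 1
    rw [pow_one] at this
    rw [← this]
    simp only [Nat.cast_one, one_mul]
    rw [h, mul_zero]
  have hdv : minpoly ℤ ζ ∣ p :=
    minpoly.isIntegrallyClosed_dvd (hprim.isIntegral hq) h1
  have hroot := hprim.pow_isRoot_minpoly hcop
  have h2 : Polynomial.aeval (ζ ^ u) p = 0 := by
    obtain ⟨r, hr⟩ := hdv
    rw [hr, map_mul]
    have : Polynomial.aeval (ζ ^ u) (minpoly ℤ ζ) = 0 := by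
      rw [Polynomial.aeval_def, ← Polynomial.eval_map]
      exact hroot
    rw [this, zero_mul]
  have h3 := hz u
  rw [h2] at h3
  have h4 : (ζ ^ u) ^ k ≠ 0 := pow_ne_zero _ (pow_ne_zero _ (Complex.exp_ne_zero _))
  exact (mul_eq_zero.mp h3).resolve_left h4

lemma MB_galois' (B : Finset ℤ) (hB : 2 ≤ B.card) (n : ℕ) (hn : 0 < n) (u : ℕ)
    (hu : Nat.Coprime u n) (c : ℤ) (h : MB B (u * ((c : ℝ) / n)) = 0) :
    MB B ((c : ℝ) / n) = 0 := by
  rcases Nat.lt_or_ge 1 n with h1 | h1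
  · obtain ⟨s, hs⟩ := Nat.exists_mul_mod_eq_one_of_coprime hu h1
    have hs := hs.2
    have hsn : Nat.Coprime s n := by
      have : Nat.Coprime (u * s) n := by
        rw [Nat.Coprime, Nat.gcd_comm, Nat.gcd_rec, hs]; simp
      exact Nat.Coprime.coprime_mul_left this
    have h2 := MB_galois B hB n hn s hsn (u * c) (by
      convert h using 2; push_cast; ring)
    have hn0 : (n : ℝ) ≠ 0 := by exact_mod_cast hn.ne'
    have h3 := Nat.div_add_mod (u * s) n
    rw [hs] at h3
    generalize u * s / n = q at h3
    rw [← h2, ← MB_add_int B ((c : ℝ) / n) (q * c)]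
    congr 1
    have h4 : (n : ℝ) * (q : ℝ) + 1 = u * s := by exact_mod_cast h3
    push_cast
    have : (s : ℝ) * (u * c / n) = (u * s) * c / n := by ring
    rw [this, ← h4]
    field_simp
    ring
  · have : n = 1 := by omega
    subst this
    have h5 : MB B ((u : ℝ) * ((c : ℝ) / (1 : ℕ))) = MB B 0 := by
      rw [← MB_add_int B 0 (u * c)]; congr 1; push_cast; ring
    rw [h5, MB_zero B hB] at h
    exact absurd h one_ne_zero

lemma lev_one (N : ℕ) (B L : Finset ℤ) (h : IsHadamardTriple N B L) (W : Finset ℕ)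
    (hW : ∀ w ∈ W, Nat.Coprime w N) : Lev N B W 1 L := by
  obtain ⟨hN, hB, hcard, horth⟩ := h
  intro w hw ξ
  have hn0 : (N : ℂ) ≠ 0 := by
    have : N ≠ 0 := by omega
    exact_mod_cast this
  have hc0 : (B.card : ℂ) ≠ 0 := by
    have : B.card ≠ 0 := by omega
    exact_mod_cast this
  have ho : ∀ l ∈ L, ∀ l' ∈ L, l ≠ l' → MB B (w * (((l - l' : ℤ) : ℝ) / N)) = 0 := by
    intro l hl l' hl' hne
    refine MB_galois B hB N (by omega) w (hW w hw) (l - l') ?_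
    rw [MB_eq_zero_iff B hB, ← horth l hl l' hl' hne]
    refine Finset.sum_congr rfl fun b _ => ?_
    congr 1
    push_cast
    ring
  let E : Matrix B L ℂ := fun b l => Complex.exp (2 * Real.pi * Complex.I * (b : ℤ) * (w * (l : ℤ) / N))
  let E' : Matrix L B ℂ := fun l b => (B.card : ℂ)⁻¹ * Complex.exp (-(2 * Real.pi * Complex.I * (b : ℤ) * (w * (l : ℤ) / N)))
  have h1 : E' * E = 1 := by
    ext l l'
    rw [Matrix.mul_apply, Matrix.one_apply]
    have : ∑ b : B, E' l b * E b l' = MB B (w * ((((l' : ℤ) - (l : ℤ) : ℤ) : ℝ) / N)) := by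
      unfold MB
      rw [Finset.mul_sum, ← Finset.sum_coe_sort B]
      refine Finset.sum_congr rfl fun b _ => ?_
      simp only [E, E']
      rw [mul_assoc, ← Complex.exp_add]
      congr 2
      push_cast
      ring
    rw [this]
    split_ifs with hll
    · subst hll; simp [MB_zero B hB]
    · exact ho _ l'.2 _ l.2 (fun hh => hll (Subtype.ext hh.symm))
  have h2 : E * E' = 1 := by
    refine (Matrix.mul_eq_one_comm_of_card_eq _ _ _ ?_).mp h1
    simp [hcard]
  -- expand the square
  have h3 : ∀ l : ℤ, ((‖PB N B 1 (ξ + w * l)‖ ^ 2 : ℝ) : ℂ) =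
      (B.card : ℂ)⁻¹ * (B.card : ℂ)⁻¹ * ∑ b ∈ B, ∑ b' ∈ B,
        Complex.exp (2 * Real.pi * Complex.I * (b - b') * (ξ / N)) *
        (Complex.exp (2 * Real.pi * Complex.I * b * (w * l / N)) *
          Complex.exp (-(2 * Real.pi * Complex.I * b' * (w * l / N)))) := by
    intro l
    have : ((‖PB N B 1 (ξ + w * l)‖ ^ 2 : ℝ) : ℂ) =
      PB N B 1 (ξ + w * l) * (starRingEnd ℂ) (PB N B 1 (ξ + w * l)) := by
      rw [Complex.mul_conj, Complex.normSq_eq_norm_sq]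
    rw [this]
    simp only [PB, MB, Finset.range_one, Finset.prod_singleton, map_mul, map_sum, map_inv₀,
      map_natCast, zero_add, pow_one, ← Complex.exp_conj]
    rw [mul_mul_mul_comm, Finset.sum_mul_sum]
    congr 1
    refine Finset.sum_congr rfl fun b _ => Finset.sum_congr rfl fun b' _ => ?_
    rw [← Complex.exp_add, ← Complex.exp_add, ← Complex.exp_add]
    congr 1
    simp only [Complex.conj_ofReal, Complex.conj_I, map_ofNat, map_intCast]
    push_cast
    field_simp
    ring
  have h4 : ((∑ l ∈ L, ‖PB N B 1 (ξ + w * l)‖ ^ 2 : ℝ) : ℂ) = 1 := by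
    rw [Complex.ofReal_sum, Finset.sum_congr rfl (fun l _ => h3 l), ← Finset.mul_sum,
      Finset.sum_comm]
    have h5 : ∀ b ∈ B, ∑ l ∈ L, ∑ b' ∈ B,
        Complex.exp (2 * Real.pi * Complex.I * (b - b') * (ξ / N)) *
        (Complex.exp (2 * Real.pi * Complex.I * b * (w * l / N)) *
          Complex.exp (-(2 * Real.pi * Complex.I * b' * (w * l / N)))) = B.card := by
      intro b hb
      rw [Finset.sum_comm]
      have h6 : ∀ b' ∈ B, ∑ l ∈ L,
        Complex.exp (2 * Real.pi * Complex.I * (b - b') * (ξ / N)) *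
        (Complex.exp (2 * Real.pi * Complex.I * b * (w * l / N)) *
          Complex.exp (-(2 * Real.pi * Complex.I * b' * (w * l / N)))) =
          if b = b' then (B.card : ℂ) else 0 := by
        intro b' hb'
        rw [← Finset.mul_sum]
        have h7 : (∑ l ∈ L, (Complex.exp (2 * Real.pi * Complex.I * b * (w * l / N)) *
          Complex.exp (-(2 * Real.pi * Complex.I * b' * (w * l / N))))) =
          B.card * (E * E') ⟨b, hb⟩ ⟨b', hb'⟩ := by
          rw [Matrix.mul_apply, Finset.mul_sum, ← Finset.sum_coe_sort L]
          refine Finset.sum_congr rfl fun l _ => ?_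
          simp only [E, E']
          field_simp
        rw [h7, h2, Matrix.one_apply]
        by_cases hbb : b = b'
        · subst hbb; simp
        · simp [hbb]
      rw [Finset.sum_congr rfl h6]
      simp [hb]
    rw [Finset.sum_congr rfl h5]
    simp
    field_simp
  exact_mod_cast h4

lemma expFun_continuous (x : ℝ) : Continuous (expFun x) := by
  unfold expFun
  fun_prop

lemma expFun_norm (x t : ℝ) : ‖expFun x t‖ = 1 := by
  unfold expFun
  rw [Complex.norm_exp]
  simp

lemma expFun_integrable (μ : Measure ℝ) [IsFiniteMeasure μ] (x : ℝ) :
    Integrable (expFun x) μ :=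
  Integrable.of_bound (expFun_continuous x).aestronglyMeasurable 1
    (Filter.Eventually.of_forall fun t => (expFun_norm x t).le)

lemma phi_zero (μ : Measure ℝ) [IsProbabilityMeasure μ] : phi μ 0 = 1 := by
  simp [phi, expFun]

lemma phi_neg (μ : Measure ℝ) (x : ℝ) : ‖phi μ (-x)‖ = ‖phi μ x‖ := by
  have : phi μ (-x) = (starRingEnd ℂ) (phi μ x) := by
    unfold phi
    rw [← integral_conj]
    congr 1
    ext t
    unfold expFun
    rw [← Complex.exp_conj]
    congr 1
    simp only [map_mul, Complex.conj_ofReal, Complex.conj_I, map_ofNat]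
    push_cast
    ring
  rw [this, RCLike.norm_conj]

lemma phi_norm_le (μ : Measure ℝ) [IsProbabilityMeasure μ] (x : ℝ) : ‖phi μ x‖ ≤ 1 := by
  have := norm_integral_le_of_norm_le_const (μ := μ) (f := expFun x) (C := 1)
    (Filter.Eventually.of_forall fun t => (expFun_norm x t).le)
  simpa [phi] using this

lemma phi_continuous (μ : Measure ℝ) [IsProbabilityMeasure μ] : Continuous (phi μ) := by
  unfold phi
  refine continuous_of_dominated (bound := fun _ => (1 : ℝ)) ?_ ?_ ?_ ?_
  · exact fun x => (expFun_continuous x).aestronglyMeasurable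
  · exact fun x => Filter.Eventually.of_forall fun t => (expFun_norm x t).le
  · exact integrable_const _
  · refine Filter.Eventually.of_forall fun t => ?_
    unfold expFun
    fun_prop

section selfsim

variable {N : ℕ} {B : Finset ℤ} {μ : Measure ℝ} [IsProbabilityMeasure μ]

lemma phi_rec (hN : 2 ≤ N)
    (hμ : μ = (B.card : ℝ≥0∞)⁻¹ •
      ∑ b ∈ B, Measure.map (fun x : ℝ => (x + (b : ℝ)) / (N : ℝ)) μ) (x : ℝ) :
    phi μ x = MB B (x / N) * phi μ (x / N) := by
  have hN0 : (N : ℂ) ≠ 0 := by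
    have : N ≠ 0 := by omega
    exact_mod_cast this
  have hmeas : ∀ b : ℤ, Measurable (fun x : ℝ => (x + (b : ℝ)) / (N : ℝ)) := by
    intro b; fun_prop
  have h1 : phi μ x = (B.card : ℂ)⁻¹ * ∑ b ∈ B, ∫ t, expFun x ((t + b) / N) ∂μ := by
    conv_lhs => rw [phi, hμ]
    rw [integral_smul_measure, integral_finsetSum_measure]
    · rw [ENNReal.toReal_inv, ENNReal.toReal_natCast, Complex.real_smul]
      push_cast
      congr 1
      refine Finset.sum_congr rfl fun b _ => ?_
      rw [integral_map (hmeas b).aemeasurable (expFun_continuous x).aestronglyMeasurable]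
    · intro b _
      have : IsFiniteMeasure (Measure.map (fun x : ℝ => (x + (b : ℝ)) / (N : ℝ)) μ) := by
        infer_instance
      exact expFun_integrable _ x
  rw [h1, MB, mul_assoc, Finset.sum_mul]
  congr 1
  refine Finset.sum_congr rfl fun b _ => ?_
  rw [phi, ← integral_const_mul]
  congr 1
  ext t
  unfold expFun
  rw [← Complex.exp_add]
  congr 1
  push_cast
  field_simp
  ring

lemma phi_eq_PB (hN : 2 ≤ N)
    (hμ : μ = (B.card : ℝ≥0∞)⁻¹ •
      ∑ b ∈ B, Measure.map (fun x : ℝ => (x + (b : ℝ)) / (N : ℝ)) μ) (n : ℕ) (x : ℝ) :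
    phi μ x = PB N B n x * phi μ (x / (N : ℝ) ^ n) := by
  induction n with
  | zero => simp [PB]
  | succ n ih =>
    rw [PB_add, ih, mul_assoc]
    congr 1
    rw [phi_rec hN hμ]
    simp [PB, pow_succ, div_div]

lemma tendsto_div_pow (hN : 2 ≤ N) (x : ℝ) :
    Filter.Tendsto (fun n : ℕ => x / (N : ℝ) ^ n) Filter.atTop (nhds 0) := by
  have h1 : (1 : ℝ) < N := by exact_mod_cast (by omega : 1 < N)
  exact (tendsto_pow_atTop_atTop_of_one_lt h1).const_div_atTop x

lemma exists_phi_ne (R : ℝ) (hN : 2 ≤ N) :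
    ∃ n : ℕ, ∀ x : ℝ, |x| ≤ R → phi μ (x / (N : ℝ) ^ n) ≠ 0 := by
  have h1 : ∀ᶠ x in nhds (0 : ℝ), phi μ x ≠ 0 :=
    (phi_continuous μ).continuousAt.eventually_ne (by simp [phi_zero])
  obtain ⟨r, hr, hr'⟩ := Metric.eventually_nhds_iff.mp h1
  have h2 := (tendsto_div_pow hN R).eventually (gt_mem_nhds hr)
  obtain ⟨n, hn⟩ := h2.exists
  refine ⟨n, fun x hx => hr' ?_⟩
  have hp : (0 : ℝ) < (N : ℝ) ^ n := by
    have : (0 : ℝ) < N := by exact_mod_cast (by omega : 0 < N)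
    positivity
  rw [dist_zero_right, Real.norm_eq_abs, abs_div, abs_of_pos hp]
  exact lt_of_le_of_lt (by gcongr) hn

lemma phi_eq_zero_iff (hN : 2 ≤ N)
    (hμ : μ = (B.card : ℝ≥0∞)⁻¹ •
      ∑ b ∈ B, Measure.map (fun x : ℝ => (x + (b : ℝ)) / (N : ℝ)) μ) (x : ℝ) :
    phi μ x = 0 ↔ ∃ k : ℕ, MB B (x / (N : ℝ) ^ (k + 1)) = 0 := by
  constructor
  · intro h
    obtain ⟨n, hn⟩ := exists_phi_ne (μ := μ) |x| hN
    rw [phi_eq_PB hN hμ n] at h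
    have := (mul_eq_zero.mp h).resolve_right (hn x le_rfl)
    unfold PB at this
    obtain ⟨k, _, hk⟩ := Finset.prod_eq_zero_iff.mp this
    exact ⟨k, hk⟩
  · rintro ⟨k, hk⟩
    rw [phi_eq_PB hN hμ (k + 1)]
    have : PB N B (k + 1) x = 0 :=
      Finset.prod_eq_zero (Finset.mem_range.mpr (Nat.lt_succ_self k)) hk
    rw [this, zero_mul]

lemma PB_analytic (n : ℕ) : AnalyticOnNhd ℝ (PB N B n) Set.univ := by
  intro x _
  have : PB N B n = fun x : ℝ => ∏ k ∈ Finset.range n, MB B (x / (N : ℝ) ^ (k + 1)) := rfl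
  rw [this]
  refine Finset.analyticAt_fun_prod _ fun k _ => ?_
  unfold MB
  refine analyticAt_const.mul (Finset.analyticAt_fun_sum _ fun b _ => ?_)
  have h1 : AnalyticAt ℝ (fun x : ℝ => ((x / (N : ℝ) ^ (k + 1) : ℝ) : ℂ)) x := by
    have : AnalyticAt ℝ (fun x : ℝ => x / (N : ℝ) ^ (k + 1)) x := by
      simp only [div_eq_mul_inv]
      exact analyticAt_id.mul analyticAt_const
    exact (Complex.ofRealCLM.analyticAt _).comp this
  have h2 := (analyticAt_const (v := 2 * Real.pi * Complex.I * (b : ℂ))).mul h1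
  exact (analyticAt_cexp.restrictScalars (𝕜 := ℝ)).comp h2

lemma phi_zeros_finite (hN : 2 ≤ N) (hB : 2 ≤ B.card)
    (hμ : μ = (B.card : ℝ≥0∞)⁻¹ •
      ∑ b ∈ B, Measure.map (fun x : ℝ => (x + (b : ℝ)) / (N : ℝ)) μ) (R : ℝ) :
    {x : ℝ | x ∈ Set.Icc 0 R ∧ phi μ x = 0}.Finite := by
  obtain ⟨n, hn⟩ := exists_phi_ne (μ := μ) R hN
  by_contra hinf
  have hinf : {x : ℝ | x ∈ Set.Icc 0 R ∧ phi μ x = 0}.Infinite := hinf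
  obtain ⟨x0, -, hacc⟩ := hinf.exists_accPt_of_subset_isCompact isCompact_Icc
    (fun x hx => hx.1)
  rw [accPt_iff_frequently_nhdsNE] at hacc
  have h1 : ∃ᶠ x in nhdsWithin x0 {x0}ᶜ, PB N B n x = 0 := by
    refine hacc.mono fun x hx => ?_
    have h2 := hx.2
    rw [phi_eq_PB hN hμ n] at h2
    refine (mul_eq_zero.mp h2).resolve_right (hn x ?_)
    rw [abs_of_nonneg hx.1.1]
    exact hx.1.2
  have h3 := (PB_analytic (N := N) (B := B) n).eqOn_zero_of_preconnected_of_frequently_eq_zero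
    isPreconnected_univ (Set.mem_univ x0) h1
  have h4 := h3 (Set.mem_univ (0 : ℝ))
  rw [PB_zero N B hB] at h4
  simp at h4

end selfsim

section key

variable {N : ℕ} {B L : Finset ℤ} {μ : Measure ℝ} [IsProbabilityMeasure μ]

lemma Z_mul (h : IsHadamardTriple N B L)
    (hμ : μ = (B.card : ℝ≥0∞)⁻¹ •
      ∑ b ∈ B, Measure.map (fun x : ℝ => (x + (b : ℝ)) / (N : ℝ)) μ) (x : ℝ)
    (hx : ∀ j : ℤ, phi μ (x + j) = 0) : ∀ j : ℤ, phi μ (N * x + j) = 0 := by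
  have hN := h.1
  have hB := h.2.1
  have hN0 : (N : ℝ) ≠ 0 := by
    have : N ≠ 0 := by omega
    exact_mod_cast this
  set Z : Set ℝ := {x | x ∈ Set.Ico (0 : ℝ) 1 ∧ ∀ j : ℤ, phi μ (x + j) = 0} with hZ
  have hfin : Z.Finite := by
    refine (phi_zeros_finite hN hB hμ 1).subset ?_
    rintro x ⟨hx, hx'⟩
    refine ⟨⟨hx.1, hx.2.le⟩, ?_⟩
    simpa using hx' 0
  have hfract : ∀ x : ℝ, (∀ j : ℤ, phi μ (x + j) = 0) → Int.fract x ∈ Z := by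
    intro x hx
    refine ⟨⟨Int.fract_nonneg x, Int.fract_lt_one x⟩, fun j => ?_⟩
    rw [← hx (j - ⌊x⌋)]
    congr 1
    push_cast
    rw [← Int.self_sub_floor]
    ring
  have hsucc : ∀ x : Z, ∃ y : Z, Int.fract (N * (y : ℝ)) = x := by
    rintro ⟨x, hx1, hx2⟩
    have h1 := lev_one N B L h {1} (by simp) 1 (by simp) x
    obtain ⟨l, hl, hne⟩ : ∃ l ∈ L, ‖PB N B 1 (x + (1 : ℕ) * l)‖ ^ 2 ≠ 0 := by
      by_contra hcon
      push Not at hcon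
      rw [Finset.sum_eq_zero hcon] at h1
      exact zero_ne_one h1
    have hne : MB B ((x + l) / N) ≠ 0 := by
      intro h0
      apply hne
      simp [PB, h0]
    refine ⟨⟨Int.fract ((x + l) / N), hfract _ fun j => ?_⟩, ?_⟩
    · have h2 := phi_rec hN hμ (x + (l + N * j : ℤ))
      rw [hx2] at h2
      have h3 : (x + (l + N * j : ℤ)) / (N : ℝ) = (x + l) / N + j := by
        push_cast
        field_simp
        ring
      rw [h3, MB_add_int] at h2
      exact (mul_eq_zero.mp h2.symm).resolve_left hne
    · have : (N : ℝ) * Int.fract ((x + l) / N) = x + (l - N * ⌊(x + l) / N⌋ : ℤ) := by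
        rw [← Int.self_sub_floor]
        push_cast
        field_simp
        ring
      simp only
      rw [this, Int.fract_add_intCast, Int.fract_eq_self.mpr hx1]
  choose σ hσ using hsucc
  have hinj : Function.Injective σ := by
    intro a b hab
    apply Subtype.ext
    rw [← hσ a, ← hσ b, hab]
  have := hfin.to_subtype
  have hsurj := Finite.surjective_of_injective hinj
  obtain ⟨y, hy⟩ := hsurj ⟨Int.fract x, hfract x hx⟩
  have h1 := hσ y
  rw [hy] at h1
  intro j
  have h2 : (N : ℝ) * x + j = Int.fract (N * Int.fract x) +
      (⌊N * Int.fract x⌋ + N * ⌊x⌋ + j : ℤ) := by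
    rw [← Int.self_sub_floor (N * Int.fract x)]
    push_cast
    have := Int.self_sub_floor x
    have h3 : x = Int.fract x + ⌊x⌋ := by rw [← this]; ring
    conv_lhs => rw [h3]
    ring
  rw [h2]
  simp only at h1
  rw [h1]
  exact y.2.2 _

lemma Z_rat (h : IsHadamardTriple N B L)
    (hμ : μ = (B.card : ℝ≥0∞)⁻¹ •
      ∑ b ∈ B, Measure.map (fun x : ℝ => (x + (b : ℝ)) / (N : ℝ)) μ) (i : ℕ) :
    ∀ a : ℤ, ∃ j : ℤ, phi μ ((a : ℝ) / (N : ℝ) ^ i + j) ≠ 0 := by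
  have hN0 : (N : ℝ) ≠ 0 := by
    have h1 := h.1
    have : N ≠ 0 := by omega
    exact_mod_cast this
  induction i with
  | zero =>
    intro a
    refine ⟨-a, ?_⟩
    simp [phi_zero]
  | succ i ih =>
    intro a
    by_contra hcon
    push Not at hcon
    have h1 := Z_mul h hμ _ hcon
    obtain ⟨j, hj⟩ := ih a
    apply hj
    rw [← h1 j]
    congr 2
    rw [pow_succ]
    field_simp

lemma joint (h : IsHadamardTriple N B L)
    (hμ : μ = (B.card : ℝ≥0∞)⁻¹ •
      ∑ b ∈ B, Measure.map (fun x : ℝ => (x + (b : ℝ)) / (N : ℝ)) μ)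
    (W : Finset ℕ) (hW : ∀ w ∈ W, Nat.Coprime w N) (i : ℕ) (a : ℤ) :
    ∃ j : ℤ, ∀ w ∈ W, phi μ (w * ((a : ℝ) / (N : ℝ) ^ i + j)) ≠ 0 := by
  have hN := h.1
  have hB := h.2.1
  have hN0 : (N : ℝ) ≠ 0 := by
    have : N ≠ 0 := by omega
    exact_mod_cast this
  obtain ⟨j, hj⟩ := Z_rat h hμ i a
  refine ⟨j, fun w hw h0 => hj ?_⟩
  rw [phi_eq_zero_iff hN hμ] at h0 ⊢
  obtain ⟨k, hk⟩ := h0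
  refine ⟨k, ?_⟩
  have h1 : ((a : ℝ) / (N : ℝ) ^ i + j) / (N : ℝ) ^ (k + 1) =
      ((a + N ^ i * j : ℤ) : ℝ) / ((N ^ (i + (k + 1)) : ℕ) : ℝ) := by
    push_cast
    rw [pow_add (N : ℝ) i (k + 1)]
    field_simp
  rw [h1]
  refine MB_galois' B hB _ (by positivity) w (Nat.Coprime.pow_right _ (hW w hw)) _ ?_
  rw [← h1, ← hk]
  congr 1
  ring

lemma local_zero (h : IsHadamardTriple N B L)
    (hμ : μ = (B.card : ℝ≥0∞)⁻¹ •
      ∑ b ∈ B, Measure.map (fun x : ℝ => (x + (b : ℝ)) / (N : ℝ)) μ)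
    (W : Finset ℕ) (hW : ∀ w ∈ W, Nat.Coprime w N) (h0 : (0 : ℤ) ∈ L) (m : ℕ) :
    ∃ D : Finset ℤ, Lev N B W m D ∧ 0 ∈ D ∧
      ∀ d ∈ D, ∀ w ∈ W, phi μ (w * (((0 : ℝ) + d) / (N : ℝ) ^ m)) ≠ 0 := by
  have hN := h.1
  have hB := h.2.1
  have hN0 : (N : ℝ) ≠ 0 := by
    have : N ≠ 0 := by omega
    exact_mod_cast this
  obtain ⟨D, hD, hD0, -⟩ := Lev.pow hN hB (lev_one N B L h W hW) h0 m
  choose j hj using fun a : ℤ => joint h hμ W hW m a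
  refine ⟨_, hD.adjust hN hB (fun d => if d = 0 then 0 else j d), ?_, ?_⟩
  · simp only [Finset.mem_image]
    exact ⟨0, hD0, by simp⟩
  · intro d' hd' w hw
    simp only [Finset.mem_image] at hd'
    obtain ⟨d, hd, rfl⟩ := hd'
    split_ifs with hd0
    · simp [hd0, phi_zero]
    · convert hj d w hw using 3
      push_cast
      field_simp
      ring

lemma local_any (h : IsHadamardTriple N B L) (hBN : B.card < N)
    (hμ : μ = (B.card : ℝ≥0∞)⁻¹ •
      ∑ b ∈ B, Measure.map (fun x : ℝ => (x + (b : ℝ)) / (N : ℝ)) μ)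
    (W : Finset ℕ) (hW : ∀ w ∈ W, Nat.Coprime w N) (hWp : ∀ w ∈ W, 0 < w)
    (h0 : (0 : ℤ) ∈ L) :
    ∃ m : ℕ, ∀ y : ℝ, ∃ D : Finset ℤ, Lev N B W m D ∧
      ∀ d ∈ D, ∀ w ∈ W, phi μ (w * ((y + d) / (N : ℝ) ^ m)) ≠ 0 := by
  have hN := h.1
  have hB := h.2.1
  have hN0 : (N : ℝ) ≠ 0 := by
    have : N ≠ 0 := by omega
    exact_mod_cast this
  have hNpos : (0 : ℝ) < N := by exact_mod_cast (by omega : 0 < N)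
  have hE : {x : ℝ | x ∈ Set.Icc (0 : ℝ) 1 ∧ ∃ w ∈ W, phi μ (w * x) = 0}.Finite := by
    have h1 : (⋃ w ∈ W, (fun x : ℝ => (w : ℝ) * x) ⁻¹' {x : ℝ | x ∈ Set.Icc (0 : ℝ) w ∧ phi μ x = 0} ∩ {_x : ℝ | 0 < w}).Finite := by
      refine Set.Finite.biUnion W.finite_toSet fun w hw => ?_
      have hw0 : (w : ℝ) ≠ 0 := by exact_mod_cast (hWp w hw).ne'
      refine Set.Finite.subset ((phi_zeros_finite hN hB hμ (w : ℝ)).preimage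
        (f := fun x : ℝ => (w : ℝ) * x) ?_) Set.inter_subset_left
      exact (mul_right_injective₀ hw0).injOn
    refine h1.subset ?_
    rintro x ⟨hx, w, hw, hwx⟩
    simp only [Set.mem_iUnion]
    refine ⟨w, hw, ⟨⟨?_, ?_⟩, hwx⟩, hWp w hw⟩
    · exact mul_nonneg (Nat.cast_nonneg w) hx.1
    · exact mul_le_of_le_one_right (Nat.cast_nonneg w) hx.2
  set E := hE.toFinset with hEdef
  obtain ⟨m, hm⟩ : ∃ m : ℕ, L.card ^ m * E.card < N ^ m := by
    have h1 : Filter.Tendsto (fun m : ℕ => ((L.card : ℝ) / N) ^ m * E.card) Filter.atTop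
        (nhds (0 * E.card)) := by
      refine (_root_.tendsto_pow_atTop_nhds_zero_of_lt_one (div_nonneg (Nat.cast_nonneg _) hNpos.le) ?_).mul_const _
      rw [div_lt_one hNpos]
      rw [h.2.2.1] at hBN
      exact_mod_cast hBN
    rw [zero_mul] at h1
    obtain ⟨m, hm⟩ := (h1.eventually (gt_mem_nhds one_pos)).exists
    refine ⟨m, ?_⟩
    rw [div_pow, div_mul_eq_mul_div, div_lt_one (by positivity)] at hm
    exact_mod_cast hm
  refine ⟨m, fun y => ?_⟩
  obtain ⟨D, hD, hD0, hDc⟩ := Lev.pow hN hB (lev_one N B L h W hW) h0 m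
  obtain ⟨t, ht⟩ : ∃ t : ℤ, ∀ d ∈ D, Int.fract ((y + (t + d : ℤ)) / (N : ℝ) ^ m) ∉ E := by
    by_contra hcon
    push Not at hcon
    choose f hf hf' using hcon
    have hlt : (D ×ˢ E).card < (Finset.range (N ^ m)).card := by
      rw [Finset.card_product, Finset.card_range]
      exact lt_of_le_of_lt (Nat.mul_le_mul_right _ hDc) hm
    obtain ⟨s, hs, s', hs', hne, heq⟩ := Finset.exists_ne_map_eq_of_card_lt_of_maps_to hlt
      (f := fun s : ℕ => (f s, Int.fract ((y + ((s : ℤ) + f s : ℤ)) / (N : ℝ) ^ m)))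
      (fun s _ => Finset.mem_coe.mpr (Finset.mem_product.mpr ⟨hf s, hf' s⟩))
    simp only [Prod.mk.injEq] at heq
    obtain ⟨h1, h2⟩ := heq
    rw [h1, Int.fract_eq_fract] at h2
    obtain ⟨z, hz⟩ := h2
    have h3 : (s : ℤ) - s' = N ^ m * z := by
      have h4 : (s : ℝ) - s' = (N : ℝ) ^ m * z := by
        rw [← hz]
        push_cast
        field_simp
        ring
      exact_mod_cast h4
    apply hne
    rw [Finset.mem_range] at hs hs'
    have h5 : (s : ℤ) ≡ s' [ZMOD ((N ^ m : ℕ) : ℤ)] := by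
      apply Int.ModEq.symm
      rw [Int.modEq_iff_dvd]
      exact ⟨z, by push_cast; exact h3⟩
    rw [Int.natCast_modEq_iff] at h5
    exact Nat.ModEq.eq_of_lt_of_lt h5 hs hs'
  refine ⟨_, (hD.translate hN hB t).adjust hN hB (fun d => -⌊(y + d) / (N : ℝ) ^ m⌋), ?_⟩
  intro d' hd' w hw
  simp only [Finset.mem_image] at hd'
  obtain ⟨e, ⟨d, hd, rfl⟩, rfl⟩ := hd'
  intro hzero
  apply ht d hd
  rw [hEdef, Set.Finite.mem_toFinset]
  refine ⟨⟨Int.fract_nonneg _, (Int.fract_lt_one _).le⟩, w, hw, ?_⟩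
  rw [← hzero, ← Int.self_sub_floor]
  congr 2
  push_cast
  field_simp
  ring

end key

section unif

variable {N : ℕ} {B L : Finset ℤ} {μ : Measure ℝ} [IsProbabilityMeasure μ]

def GoodD (N : ℕ) (μ : Measure ℝ) (W : Finset ℕ) (m : ℕ) (ρ c : ℝ) (y : ℝ) (D : Finset ℤ) : Prop :=
  ∀ d ∈ D, ∀ w ∈ W, ∀ η : ℝ, |η| ≤ ρ → c ≤ ‖phi μ (w * ((y + d) / (N : ℝ) ^ m) + η)‖

lemma GoodD.mono {W : Finset ℕ} {m : ℕ} {ρ c ρ' c' y : ℝ} {D : Finset ℤ}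
    (h : GoodD N μ W m ρ c y D) (hρ : ρ' ≤ ρ) (hc : c' ≤ c) : GoodD N μ W m ρ' c' y D :=
  fun d hd w hw η hη => hc.trans (h d hd w hw η (hη.trans hρ))

lemma good_nhds (W : Finset ℕ) (m : ℕ) (y0 : ℝ) (D : Finset ℤ)
    (h : ∀ d ∈ D, ∀ w ∈ W, phi μ (w * ((y0 + d) / (N : ℝ) ^ m)) ≠ 0) :
    ∃ r > 0, ∃ c > 0, ∀ y, |y - y0| < r → GoodD N μ W m (r / 2) c y D := by
  let g : ℝ × ℝ → ℝ := fun p =>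
    ∏ q ∈ D ×ˢ W, ‖phi μ (q.2 * ((p.1 + q.1) / (N : ℝ) ^ m) + p.2)‖
  have hg : Continuous g := by
    have := phi_continuous μ
    refine continuous_finsetProd _ fun q _ => ?_
    refine (this.comp ?_).norm
    fun_prop
  have hpos : 0 < g (y0, 0) := by
    refine Finset.prod_pos fun q hq => ?_
    rw [Finset.mem_product] at hq
    simpa using h q.1 hq.1 q.2 hq.2
  have hev : ∀ᶠ p in nhds (y0, (0 : ℝ)), g (y0, 0) / 2 < g p :=
    hg.continuousAt.eventually (lt_mem_nhds (by linarith))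
  obtain ⟨r, hr, hr'⟩ := Metric.eventually_nhds_iff.mp hev
  refine ⟨r, hr, g (y0, 0) / 2, by positivity, fun y hy d hd w hw η hη => ?_⟩
  have h1 : g (y0, 0) / 2 < g (y, η) := by
    apply hr'
    rw [Prod.dist_eq, max_lt_iff]
    refine ⟨by simpa [Real.dist_eq] using hy, ?_⟩
    simp only [Real.dist_eq, sub_zero]
    linarith
  refine h1.le.trans ?_
  have hmem : (d, w) ∈ D ×ˢ W := Finset.mem_product.mpr ⟨hd, hw⟩
  simp only [g]
  rw [← Finset.mul_prod_erase _ _ hmem]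
  refine mul_le_of_le_one_right (norm_nonneg _) ?_
  exact Finset.prod_le_one (fun _ _ => norm_nonneg _) (fun _ _ => phi_norm_le μ _)

lemma unif (h : IsHadamardTriple N B L) (hBN : B.card < N)
    (hμ : μ = (B.card : ℝ≥0∞)⁻¹ •
      ∑ b ∈ B, Measure.map (fun x : ℝ => (x + (b : ℝ)) / (N : ℝ)) μ)
    (W : Finset ℕ) (hW : ∀ w ∈ W, Nat.Coprime w N) (hWp : ∀ w ∈ W, 0 < w)
    (h0 : (0 : ℤ) ∈ L) :
    ∃ m : ℕ, ∃ ρ > 0, ∃ c > 0,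
      (∀ y : ℝ, ∃ D : Finset ℤ, Lev N B W m D ∧ GoodD N μ W m ρ c y D) ∧
      (∀ y : ℝ, |y| ≤ ρ → ∃ D : Finset ℤ, Lev N B W m D ∧ 0 ∈ D ∧ GoodD N μ W m ρ c y D) := by
  have hN := h.1
  have hB := h.2.1
  obtain ⟨m, hm⟩ := local_any h hBN hμ W hW hWp h0
  have hcpt : ∃ ρ > 0, ∃ c > 0, ∀ y ∈ Set.Icc (0 : ℝ) 1, ∃ D : Finset ℤ,
      Lev N B W m D ∧ GoodD N μ W m ρ c y D := by
    refine IsCompact.induction_on (p := fun S => ∃ ρ > 0, ∃ c > 0, ∀ y ∈ S, ∃ D : Finset ℤ,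
      Lev N B W m D ∧ GoodD N μ W m ρ c y D) isCompact_Icc ?_ ?_ ?_ ?_
    · exact ⟨1, one_pos, 1, one_pos, by simp⟩
    · rintro S T hST ⟨ρ, hρ, c, hc, hh⟩
      exact ⟨ρ, hρ, c, hc, fun y hy => hh y (hST hy)⟩
    · rintro S T ⟨ρ, hρ, c, hc, hh⟩ ⟨ρ', hρ', c', hc', hh'⟩
      refine ⟨min ρ ρ', lt_min hρ hρ', min c c', lt_min hc hc', ?_⟩
      rintro y (hy | hy)
      · obtain ⟨D, hD, hG⟩ := hh y hy
        exact ⟨D, hD, hG.mono (min_le_left _ _) (min_le_left _ _)⟩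
      · obtain ⟨D, hD, hG⟩ := hh' y hy
        exact ⟨D, hD, hG.mono (min_le_right _ _) (min_le_right _ _)⟩
    · intro y0 _
      obtain ⟨D, hD, hne⟩ := hm y0
      obtain ⟨r, hr, c, hc, hG⟩ := good_nhds W m y0 D hne
      refine ⟨Metric.ball y0 r, mem_nhdsWithin_of_mem_nhds (Metric.ball_mem_nhds y0 hr),
        r / 2, by positivity, c, hc, fun y hy => ⟨D, hD, hG y ?_⟩⟩
      simpa [Real.dist_eq] using hy
  obtain ⟨ρ, hρ, c, hc, hcpt⟩ := hcpt
  obtain ⟨D0, hD0, hz, hne⟩ := local_zero h hμ W hW h0 m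
  obtain ⟨r, hr, c', hc', hG⟩ := good_nhds W m 0 D0 hne
  refine ⟨m, min ρ (r / 2), lt_min hρ (by positivity), min c c', lt_min hc hc', ?_, ?_⟩
  · intro y
    obtain ⟨D, hD, hGD⟩ := hcpt (Int.fract y) ⟨Int.fract_nonneg y, (Int.fract_lt_one y).le⟩
    refine ⟨_, hD.translate hN hB (-⌊y⌋), ?_⟩
    intro d' hd' w hw η hη
    simp only [Finset.mem_image] at hd'
    obtain ⟨d, hd, rfl⟩ := hd'
    have := (hGD.mono (min_le_left ρ (r / 2)) (min_le_left c c')) d hd w hw η hη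
    have he : y + ((-⌊y⌋ + d : ℤ) : ℝ) = Int.fract y + d := by
      rw [← Int.self_sub_floor]
      push_cast
      ring
    rw [he]
    exact this
  · intro y hy
    refine ⟨D0, hD0, hz, (hG y ?_).mono (min_le_right _ _) (min_le_right _ _)⟩
    have := hy.trans (min_le_right _ _)
    rw [sub_zero]
    linarith

def GoodG (N : ℕ) (μ : Measure ℝ) (W : Finset ℕ) (ρ c : ℝ) (n : ℕ) (G : Finset ℤ) : Prop :=
  ∀ g ∈ G, ∀ w ∈ W, ∀ η : ℝ, |η| ≤ ρ → c ≤ ‖phi μ (w * ((g : ℝ) / (N : ℝ) ^ n) + η)‖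

lemma step (h : IsHadamardTriple N B L)
    (W : Finset ℕ) (hW : ∀ w ∈ W, Nat.Coprime w N)
    (h0 : (0 : ℤ) ∈ L) (m : ℕ) (ρ c : ℝ) (hρ : 0 < ρ)
    (h1 : ∀ y : ℝ, ∃ D : Finset ℤ, Lev N B W m D ∧ GoodD N μ W m ρ c y D)
    (h2 : ∀ y : ℝ, |y| ≤ ρ → ∃ D : Finset ℤ, Lev N B W m D ∧ 0 ∈ D ∧ GoodD N μ W m ρ c y D)
    (n : ℕ) (G : Finset ℤ) (hG : Lev N B W n G) :
    ∃ n' : ℕ, ∃ G' : Finset ℤ, n < n' ∧ G ⊆ G' ∧ Lev N B W n' G' ∧ GoodG N μ W ρ c n' G' := by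
  have hN := h.1
  have hB := h.2.1
  have hN0 : (N : ℝ) ≠ 0 := by
    have : N ≠ 0 := by omega
    exact_mod_cast this
  have hev : ∀ g ∈ G, ∀ᶠ M : ℕ in Filter.atTop, |(g : ℝ) / (N : ℝ) ^ M| ≤ ρ := by
    intro g _
    have := (tendsto_div_pow hN (g : ℝ)).abs
    rw [abs_zero] at this
    exact this.eventually (ge_mem_nhds hρ)
  obtain ⟨M, hM, hMn⟩ := (((Filter.eventually_all_finset G).mpr hev).and
    (Filter.eventually_gt_atTop n)).exists
  obtain ⟨p, rfl⟩ : ∃ p, M = n + p := ⟨M - n, by omega⟩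
  obtain ⟨P, hP, hP0, -⟩ := Lev.pow hN hB (lev_one N B L h W hW) h0 p
  have hG1 := hG.comp hN hB (fun _ => P) (fun _ _ => hP)
  set G1 := G.biUnion fun g => P.image (fun d => g + (N : ℤ) ^ n * d) with hG1def
  have hsub : G ⊆ G1 := by
    intro g hg
    rw [hG1def, Finset.mem_biUnion]
    exact ⟨g, hg, Finset.mem_image.mpr ⟨0, hP0, by simp⟩⟩
  have hex : ∀ g : ℤ, ∃ D : Finset ℤ, Lev N B W m D ∧ (g ∈ G → (0 : ℤ) ∈ D) ∧
      GoodD N μ W m ρ c ((g : ℝ) / (N : ℝ) ^ (n + p)) D := by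
    intro g
    by_cases hg : g ∈ G
    · obtain ⟨D, hD, hz, hGD⟩ := h2 _ (hM g hg)
      exact ⟨D, hD, fun _ => hz, hGD⟩
    · obtain ⟨D, hD, hGD⟩ := h1 ((g : ℝ) / (N : ℝ) ^ (n + p))
      exact ⟨D, hD, fun hh => absurd hh hg, hGD⟩
  choose D hD hDz hDG using hex
  refine ⟨n + p + m, _, by omega, ?_, hG1.comp hN hB D (fun g _ => hD g), ?_⟩
  · intro g hg
    rw [Finset.mem_biUnion]
    exact ⟨g, hsub hg, Finset.mem_image.mpr ⟨0, hDz g hg, by simp⟩⟩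
  · intro x hx w hw η hη
    simp only [Finset.mem_biUnion, Finset.mem_image] at hx
    obtain ⟨g, hg, d, hd, rfl⟩ := hx
    have := hDG g d hd w hw η hη
    convert this using 5
    push_cast
    rw [pow_add (N : ℝ) (n + p) m]
    field_simp

lemma PB_tendsto (hN : 2 ≤ N)
    (hμ : μ = (B.card : ℝ≥0∞)⁻¹ •
      ∑ b ∈ B, Measure.map (fun x : ℝ => (x + (b : ℝ)) / (N : ℝ)) μ) (x : ℝ) :
    Filter.Tendsto (fun n => PB N B n x) Filter.atTop (nhds (phi μ x)) := by
  have h1 : Filter.Tendsto (fun n : ℕ => phi μ (x / (N : ℝ) ^ n)) Filter.atTop (nhds 1) := by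
    have := ((phi_continuous μ).tendsto 0).comp (tendsto_div_pow hN x)
    rwa [phi_zero] at this
  have h2 : Filter.Tendsto (fun n : ℕ => phi μ x / phi μ (x / (N : ℝ) ^ n)) Filter.atTop
      (nhds (phi μ x / 1)) := tendsto_const_nhds.div h1 one_ne_zero
  rw [div_one] at h2
  refine h2.congr' ?_
  filter_upwards [h1.eventually_ne one_ne_zero] with n hn
  rw [phi_eq_PB hN hμ n x]
  field_simp

lemma parseval (hN : 2 ≤ N)
    (hμ : μ = (B.card : ℝ≥0∞)⁻¹ •
      ∑ b ∈ B, Measure.map (fun x : ℝ => (x + (b : ℝ)) / (N : ℝ)) μ)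
    (W : Finset ℕ) (ρ c : ℝ) (hρ : 0 < ρ) (hc : 0 < c) (n : ℕ → ℕ) (hn : StrictMono n)
    (G : ℕ → Finset ℤ) (hG : Monotone G) (hLev : ∀ k, Lev N B W (n k) (G k))
    (hgood : ∀ k, GoodG N μ W ρ c (n k) (G k)) (w : ℕ) (hw : w ∈ W) (ξ : ℝ) :
    Filter.Tendsto (fun k => ∑ g ∈ G k, ‖phi μ (ξ + w * g)‖ ^ 2) Filter.atTop (nhds 1) := by
  set a : ℕ → ℝ := fun k => ∑ g ∈ G k, ‖phi μ (ξ + w * g)‖ ^ 2 with ha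
  have hmono : Monotone a := fun k l hkl =>
    Finset.sum_le_sum_of_subset_of_nonneg (hG hkl) fun _ _ _ => by positivity
  have hle : ∀ k, a k ≤ 1 := by
    intro k
    rw [← hLev k w hw ξ]
    refine Finset.sum_le_sum fun g _ => ?_
    rw [phi_eq_PB hN hμ (n k), norm_mul, mul_pow]
    refine mul_le_of_le_one_right (by positivity) ?_
    exact pow_le_one₀ (norm_nonneg _) (phi_norm_le μ _)
  have hbdd : BddAbove (Set.range a) := ⟨1, by rintro _ ⟨k, rfl⟩; exact hle k⟩
  have hlim := tendsto_atTop_ciSup hmono hbdd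
  set A := ⨆ k, a k with hA
  have hA1 : A ≤ 1 := ciSup_le hle
  have haA : ∀ k, a k ≤ A := le_ciSup hbdd
  have hkey : ∀ k0 : ℕ, 1 ≤ a k0 + (c ^ 2)⁻¹ * (A - a k0) := by
    intro k0
    have hl : Filter.Tendsto (fun k => ∑ g ∈ G k0, ‖PB N B (n k) (ξ + w * g)‖ ^ 2
        + (c ^ 2)⁻¹ * (A - a k0)) Filter.atTop (nhds (a k0 + (c ^ 2)⁻¹ * (A - a k0))) := by
      refine Filter.Tendsto.add_const _ ?_
      refine tendsto_finsetSum _ fun g _ => ?_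
      exact (((PB_tendsto hN hμ _).comp hn.tendsto_atTop).norm).pow 2
    refine ge_of_tendsto hl ?_
    have hsmall : ∀ᶠ k in Filter.atTop, |ξ / (N : ℝ) ^ (n k)| ≤ ρ := by
      have := ((tendsto_div_pow hN ξ).comp hn.tendsto_atTop).abs
      rw [abs_zero] at this
      exact this.eventually (ge_mem_nhds hρ)
    filter_upwards [hsmall, Filter.eventually_ge_atTop k0] with k hk hk0
    have hsub := hG hk0
    rw [← hLev k w hw ξ, ← Finset.sum_sdiff hsub, add_comm]
    gcongr
    have h3 : ∑ g ∈ G k \ G k0, ‖PB N B (n k) (ξ + w * g)‖ ^ 2 ≤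
        ∑ g ∈ G k \ G k0, (c ^ 2)⁻¹ * ‖phi μ (ξ + w * g)‖ ^ 2 := by
      refine Finset.sum_le_sum fun g hg => ?_
      have hg' : g ∈ G k := (Finset.mem_sdiff.mp hg).1
      have h4 := hgood k g hg' w hw _ hk
      have h5 : (w : ℝ) * ((g : ℝ) / (N : ℝ) ^ (n k)) + ξ / (N : ℝ) ^ (n k) =
        (ξ + w * g) / (N : ℝ) ^ (n k) := by ring
      rw [h5] at h4
      rw [phi_eq_PB hN hμ (n k) (ξ + w * g), norm_mul, mul_pow, inv_mul_eq_div,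
        le_div_iff₀ (by positivity)]
      gcongr
    refine h3.trans ?_
    rw [← Finset.mul_sum]
    gcongr
    have h6 : ∑ g ∈ G k \ G k0, ‖phi μ (ξ + w * g)‖ ^ 2 + a k0 = a k :=
      Finset.sum_sdiff hsub
    have := haA k
    linarith
  have hA2 : 1 ≤ A := by
    have hl : Filter.Tendsto (fun k => a k + (c ^ 2)⁻¹ * (A - a k)) Filter.atTop
        (nhds (A + (c ^ 2)⁻¹ * (A - A))) :=
      hlim.add ((hlim.const_sub A).const_mul _)
    rw [sub_self, mul_zero, add_zero] at hl
    exact ge_of_tendsto' hl hkey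
  rw [le_antisymm hA1 hA2] at hlim
  exact hlim

end unif

lemma real_zero_of_fourier (μ : Measure ℝ) [IsProbabilityMeasure μ] (g : ℝ → ℝ)
    (hg : Integrable g μ) (h : ∀ x : ℝ, ∫ t, (g t : ℂ) * expFun x t ∂μ = 0) :
    g =ᵐ[μ] 0 := by
  have hm : AEMeasurable g μ := hg.aestronglyMeasurable.aemeasurable
  have hmn : AEMeasurable (fun t => ENNReal.ofReal (-g t)) μ := hm.neg.ennreal_ofReal
  have hi1 : ∫⁻ t, ENNReal.ofReal (g t) ∂μ ≠ ⊤ := hg.lintegral_lt_top.ne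
  have hi2 : ∫⁻ t, ENNReal.ofReal (-g t) ∂μ ≠ ⊤ := hg.neg.lintegral_lt_top.ne
  have hf1 : IsFiniteMeasure (μ.withDensity fun t => ENNReal.ofReal (g t)) :=
    isFiniteMeasure_withDensity hi1
  have hf2 : IsFiniteMeasure (μ.withDensity fun t => ENNReal.ofReal (-g t)) :=
    isFiniteMeasure_withDensity hi2
  have heq : (μ.withDensity fun t => ENNReal.ofReal (g t)) =
      μ.withDensity fun t => ENNReal.ofReal (-g t) := by
    refine Measure.ext_of_charFun ?_
    ext s
    rw [charFun_apply_real, charFun_apply_real,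
      integral_withDensity_eq_integral_toReal_smul₀ hm.ennreal_ofReal (by simp),
      integral_withDensity_eq_integral_toReal_smul₀ hmn (by simp)]
    rw [← sub_eq_zero, ← integral_sub, ← h (s / (2 * Real.pi))]
    · congr 1
      ext t
      rw [← sub_smul]
      have h1 : (ENNReal.ofReal (g t)).toReal - (ENNReal.ofReal (-g t)).toReal = g t := by
        rw [ENNReal.toReal_ofReal', ENNReal.toReal_ofReal']
        rcases le_total 0 (g t) with h0 | h0
        · rw [max_eq_left h0, max_eq_right (by linarith)]; ring
        · rw [max_eq_right h0, max_eq_left (by linarith)]; ring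
      rw [h1, Complex.real_smul]
      congr 1
      unfold expFun
      congr 1
      have : (Real.pi : ℂ) ≠ 0 := by exact_mod_cast Real.pi_ne_zero
      push_cast
      field_simp
    · have : Integrable (fun t => (ENNReal.ofReal (g t)).toReal) μ :=
        integrable_toReal_of_lintegral_ne_top hm.ennreal_ofReal hi1
      simp only [Complex.real_smul]
      refine this.ofReal.mul_bdd (c := 1) (Continuous.aestronglyMeasurable (by fun_prop))
        (Filter.Eventually.of_forall fun t => ?_)
      rw [Complex.norm_exp]
      simp
    · have : Integrable (fun t => (ENNReal.ofReal (-g t)).toReal) μ :=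
        integrable_toReal_of_lintegral_ne_top hmn hi2
      simp only [Complex.real_smul]
      refine this.ofReal.mul_bdd (c := 1) (Continuous.aestronglyMeasurable (by fun_prop))
        (Filter.Eventually.of_forall fun t => ?_)
      rw [Complex.norm_exp]
      simp
  have h2 := (withDensity_eq_iff hm.ennreal_ofReal hmn hi1).mp heq
  filter_upwards [h2] with t ht
  rcases le_total 0 (g t) with h0 | h0
  · rw [ENNReal.ofReal_of_nonpos (by linarith : -g t ≤ 0), ENNReal.ofReal_eq_zero] at ht
    exact le_antisymm ht h0
  · rw [ENNReal.ofReal_of_nonpos h0, eq_comm, ENNReal.ofReal_eq_zero] at ht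
    simp only [Pi.zero_apply]
    linarith

lemma expFun_conj (x t : ℝ) : (starRingEnd ℂ) (expFun x t) = expFun (-x) t := by
  unfold expFun
  rw [← Complex.exp_conj]
  congr 1
  simp only [map_mul, Complex.conj_ofReal, Complex.conj_I, map_ofNat]
  push_cast
  ring

lemma expFun_add (x y t : ℝ) : expFun (x + y) t = expFun x t * expFun y t := by
  unfold expFun
  rw [← Complex.exp_add]
  congr 1
  push_cast
  ring

lemma complex_zero_of_fourier (μ : Measure ℝ) [IsProbabilityMeasure μ] (f : ℝ → ℂ)
    (hf : Integrable f μ) (h : ∀ x : ℝ, ∫ t, f t * expFun x t ∂μ = 0) :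
    f =ᵐ[μ] 0 := by
  have hfe : ∀ x, Integrable (fun t => f t * expFun x t) μ := fun x =>
    hf.mul_bdd (c := 1) (expFun_continuous x).aestronglyMeasurable
      (Filter.Eventually.of_forall fun t => (expFun_norm x t).le)
  have hcf : Integrable (fun t => (starRingEnd ℂ) (f t)) μ := by
    refine hf.congr' (Complex.continuous_conj.comp_aestronglyMeasurable hf.aestronglyMeasurable) ?_
    exact Filter.Eventually.of_forall fun t => by simp
  have hcfe : ∀ x, Integrable (fun t => (starRingEnd ℂ) (f t) * expFun x t) μ := fun x =>
    hcf.mul_bdd (c := 1) (expFun_continuous x).aestronglyMeasurable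
      (Filter.Eventually.of_forall fun t => (expFun_norm x t).le)
  have hc : ∀ x : ℝ, ∫ t, (starRingEnd ℂ) (f t) * expFun x t ∂μ = 0 := by
    intro x
    have h1 := congrArg (starRingEnd ℂ) (h (-x))
    rw [← integral_conj, map_zero] at h1
    rw [← h1]
    congr 1
    ext t
    rw [map_mul, expFun_conj, neg_neg]
  have hre := real_zero_of_fourier μ (fun t => (f t).re) hf.re (by
    intro x
    have h1 : (fun t => (((f t).re : ℝ) : ℂ) * expFun x t) =
        fun t => (1 / 2 : ℂ) * (f t * expFun x t + (starRingEnd ℂ) (f t) * expFun x t) := by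
      ext t
      rw [Complex.re_eq_add_conj]
      ring
    rw [h1, integral_const_mul, integral_add (hfe x) (hcfe x), h x, hc x]
    simp)
  have him := real_zero_of_fourier μ (fun t => (f t).im) hf.im (by
    intro x
    have h1 : (fun t => (((f t).im : ℝ) : ℂ) * expFun x t) =
        fun t => (1 / (2 * Complex.I) : ℂ) * (f t * expFun x t - (starRingEnd ℂ) (f t) * expFun x t) := by
      ext t
      rw [Complex.im_eq_sub_conj]
      ring
    rw [h1, integral_const_mul, integral_sub (hfe x) (hcfe x), h x, hc x]
    simp)
  filter_upwards [hre, him] with t h1 h2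
  exact Complex.ext h1 h2

lemma expFun_memLp (μ : Measure ℝ) [IsProbabilityMeasure μ] (x : ℝ) : MemLp (expFun x) 2 μ :=
  MemLp.of_bound (expFun_continuous x).aestronglyMeasurable 1
    (Filter.Eventually.of_forall fun t => (expFun_norm x t).le)

noncomputable def EL (μ : Measure ℝ) [IsProbabilityMeasure μ] (x : ℝ) : Lp ℂ 2 μ :=
  (expFun_memLp μ x).toLp (expFun x)

lemma EL_coe (μ : Measure ℝ) [IsProbabilityMeasure μ] (x : ℝ) :
    (EL μ x : ℝ → ℂ) =ᵐ[μ] expFun x := MemLp.coeFn_toLp _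

lemma EL_inner (μ : Measure ℝ) [IsProbabilityMeasure μ] (x y : ℝ) :
    inner ℂ (EL μ x) (EL μ y) = phi μ (y - x) := by
  rw [L2.inner_def, phi]
  refine integral_congr_ae ?_
  filter_upwards [EL_coe μ x, EL_coe μ y] with t h1 h2
  rw [h1, h2, RCLike.inner_apply, expFun_conj, ← expFun_add, sub_eq_add_neg]

lemma EL_total (μ : Measure ℝ) [IsProbabilityMeasure μ] (f : Lp ℂ 2 μ)
    (h : ∀ x, inner ℂ (EL μ x) f = 0) : f = 0 := by
  have hint : Integrable (f : ℝ → ℂ) μ := (Lp.memLp f).integrable (by norm_num)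
  have h1 := complex_zero_of_fourier μ f hint (by
    intro x
    rw [← h (-x), L2.inner_def]
    refine integral_congr_ae ?_
    filter_upwards [EL_coe μ (-x)] with t h1
    rw [h1, RCLike.inner_apply, expFun_conj, neg_neg])
  exact (Lp.eq_zero_iff_ae_eq_zero).mpr h1

lemma bessel_eq {𝕜 E ι : Type*} [RCLike 𝕜] [SeminormedAddCommGroup E] [InnerProductSpace 𝕜 E] {v : ι → E}
    (hv : Orthonormal 𝕜 v) (x : E) (s : Finset ι) :
    ‖x - ∑ i ∈ s, inner 𝕜 (v i) x • v i‖ ^ 2 = ‖x‖ ^ 2 - ∑ i ∈ s, ‖inner 𝕜 (v i) x‖ ^ 2 := by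
  have h₂ :
    (∑ i ∈ s, ∑ j ∈ s, inner 𝕜 (v i) x * inner 𝕜 x (v j) * inner 𝕜 (v j) (v i))
      = (∑ k ∈ s, inner 𝕜 (v k) x * inner 𝕜 x (v k) : 𝕜) := hv.inner_left_right_finset
  have h₃ : ∀ z : 𝕜, RCLike.re (z * (starRingEnd 𝕜) z) = ‖z‖ ^ 2 := by
    intro z
    simp only [RCLike.mul_conj]
    norm_cast
  rw [@norm_sub_sq 𝕜, sub_add]
  simp only [@InnerProductSpace.norm_sq_eq_re_inner 𝕜 E, inner_sum, sum_inner]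
  simp only [inner_smul_right, two_mul, inner_smul_left, inner_conj_symm, ← mul_assoc, h₂,
    _root_.add_sub_cancel_right, _root_.sub_right_inj]
  simp only [map_sum, ← inner_conj_symm x, ← h₃]

lemma spectrum_of_parseval (μ : Measure ℝ) [IsProbabilityMeasure μ] (w : ℕ) (hw : 0 < w)
    (G : ℕ → Finset ℤ)
    (horth : ∀ g ∈ ⋃ k, (G k : Set ℤ), ∀ g' ∈ ⋃ k, (G k : Set ℤ), g ≠ g' →
      phi μ (w * ((g : ℝ) - g')) = 0)
    (hpars : ∀ ξ : ℝ, Filter.Tendsto (fun k => ∑ g ∈ G k, ‖phi μ (ξ + w * g)‖ ^ 2)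
      Filter.atTop (nhds 1)) :
    IsSpectrum μ ((fun g : ℤ => (w : ℝ) * g) '' ⋃ k, (G k : Set ℤ)) := by
  have hw0 : (w : ℝ) ≠ 0 := by exact_mod_cast hw.ne'
  set Λ := (fun g : ℤ => (w : ℝ) * g) '' ⋃ k, (G k : Set ℤ) with hΛ
  have hON : Orthonormal ℂ (fun l : Λ => EL μ (l : ℝ)) := by
    classical
    rw [orthonormal_iff_ite]
    rintro ⟨_, g, hg, rfl⟩ ⟨_, g', hg', rfl⟩
    rw [EL_inner]
    by_cases hgg : g = g'
    · subst hgg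
      simp [phi_zero]
    · have : ¬ ((w : ℝ) * g = w * g') := by
        intro hh
        apply hgg
        exact_mod_cast mul_left_cancel₀ hw0 hh
      rw [if_neg (fun hh => this (congrArg Subtype.val hh)), ← mul_sub]
      exact horth g' hg' g hg (Ne.symm hgg)
  refine ⟨fun l => EL μ (l : ℝ), fun l => EL_coe μ _, hON, ?_⟩
  rw [Submodule.topologicalClosure_eq_top_iff, Submodule.eq_bot_iff]
  intro f hf
  rw [Submodule.mem_orthogonal] at hf
  have hf' : ∀ l : Λ, inner ℂ (EL μ (l : ℝ)) f = 0 := fun l =>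
    hf _ (Submodule.subset_span ⟨l, rfl⟩)
  refine EL_total μ f fun ξ => ?_
  -- approximate
  let e : ∀ k, G k ↪ Λ := fun k =>
    ⟨fun g => ⟨(w : ℝ) * (g : ℤ), (g : ℤ), Set.mem_iUnion.mpr ⟨k, g.2⟩, rfl⟩, by
      intro a b hab
      have hab' : (w : ℝ) * ((a : ℤ) : ℝ) = w * ((b : ℤ) : ℝ) := congrArg Subtype.val hab
      apply Subtype.ext
      exact_mod_cast mul_left_cancel₀ hw0 hab'⟩
  have hb : ∀ k, ‖inner ℂ (EL μ ξ) f‖ ^ 2 ≤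
      (1 - ∑ g ∈ G k, ‖phi μ (-ξ + w * g)‖ ^ 2) * ‖f‖ ^ 2 := by
    intro k
    have h1 := bessel_eq hON (EL μ ξ) (Finset.univ.map (e k))
    have h2 : ∑ l ∈ Finset.univ.map (e k), ‖inner ℂ (EL μ (l : ℝ)) (EL μ ξ)‖ ^ 2 =
        ∑ g ∈ G k, ‖phi μ (-ξ + w * g)‖ ^ 2 := by
      rw [Finset.sum_map, ← Finset.sum_coe_sort (G k)]
      refine Finset.sum_congr rfl fun g _ => ?_
      rw [EL_inner, ← phi_neg]
      have he : ((e k g : Λ) : ℝ) = (w : ℝ) * ((g : ℤ) : ℝ) := rfl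
      rw [he]
      congr 3
      ring
    have h3 : ‖EL μ ξ‖ ^ 2 = 1 := by
      rw [@InnerProductSpace.norm_sq_eq_re_inner ℂ, EL_inner]
      simp [phi_zero]
    rw [h2, h3] at h1
    have h4 : inner ℂ (EL μ ξ) f = inner ℂ (EL μ ξ - ∑ l ∈ Finset.univ.map (e k),
        inner ℂ (EL μ (l : ℝ)) (EL μ ξ) • EL μ (l : ℝ)) f := by
      rw [inner_sub_left, sum_inner]
      simp only [inner_smul_left, hf', mul_zero, Finset.sum_const_zero, sub_zero]
    rw [← h1, ← mul_pow, h4]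
    gcongr
    exact norm_inner_le_norm _ _
  have hl := ((hpars (-ξ)).const_sub 1).mul_const (‖f‖ ^ 2)
  rw [sub_self, zero_mul] at hl
  have := ge_of_tendsto' hl hb
  have h5 : ‖inner ℂ (EL μ ξ) f‖ = 0 := by
    have h6 := norm_nonneg (inner ℂ (EL μ ξ) f)
    nlinarith
  exact norm_eq_zero.mp h5

theorem spectral_eigenvalue_of_coprime_rational (N : ℕ) (B L : Finset ℤ)
    (h : IsHadamardTriple N B L) (hBN : B.card < N)
    (μ : Measure ℝ) [IsProbabilityMeasure μ]
    (hμ : μ = (B.card : ℝ≥0∞)⁻¹ •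
      ∑ b ∈ B, Measure.map (fun x : ℝ => (x + (b : ℝ)) / (N : ℝ)) μ)
    (u v : ℕ) (hu : 0 < u) (hv : 0 < v)
    (huv : Nat.Coprime u v) (hN : Nat.Coprime (u * v) N) :
    ∃ Λ : Set ℝ, IsSpectrum μ Λ ∧
      IsSpectrum μ ((fun x : ℝ => ((v : ℝ) / (u : ℝ)) * x) '' Λ) := by
  classical
  obtain ⟨hN2, hB, hcard, horth⟩ := h
  -- translate L so that it contains 0
  obtain ⟨l0, hl0⟩ : L.Nonempty := Finset.card_pos.mp (by omega)
  have h' : IsHadamardTriple N B (L.image fun l => l - l0) := by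
    refine ⟨hN2, hB, ?_, ?_⟩
    · rw [Finset.card_image_of_injective _ (sub_left_injective), hcard]
    · intro l hl l' hl' hne
      obtain ⟨a, ha, rfl⟩ := Finset.mem_image.mp hl
      obtain ⟨a', ha', rfl⟩ := Finset.mem_image.mp hl'
      have hne' : a ≠ a' := fun hh => hne (by rw [hh])
      rw [← horth a ha a' ha' hne']
      refine Finset.sum_congr rfl fun b _ => ?_
      congr 1
      push_cast
      ring
  have h0 : (0 : ℤ) ∈ L.image fun l => l - l0 := Finset.mem_image.mpr ⟨l0, hl0, by simp⟩
  generalize L.image (fun l => l - l0) = L' at h' h0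
  let W : Finset ℕ := {u, v}
  have huW : u ∈ W := by simp [W]
  have hvW : v ∈ W := by simp [W]
  have hW : ∀ w ∈ W, Nat.Coprime w N := by
    intro w hw
    simp only [W, Finset.mem_insert, Finset.mem_singleton] at hw
    rcases hw with rfl | rfl
    · exact Nat.Coprime.coprime_mul_right hN
    · exact Nat.Coprime.coprime_mul_left hN
  have hWp : ∀ w ∈ W, 0 < w := by
    intro w hw
    simp only [W, Finset.mem_insert, Finset.mem_singleton] at hw
    rcases hw with rfl | rfl <;> assumption
  obtain ⟨m, ρ, hρ, c, hc, h1, h2⟩ := unif h' hBN hμ W hW hWp h0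
  have hstep : ∀ s : {p : ℕ × Finset ℤ // Lev N B W p.1 p.2},
      ∃ s' : {p : ℕ × Finset ℤ // Lev N B W p.1 p.2}, s.1.1 < s'.1.1 ∧ s.1.2 ⊆ s'.1.2 ∧
        GoodG N μ W ρ c s'.1.1 s'.1.2 := by
    rintro ⟨⟨n, G⟩, hG⟩
    obtain ⟨n', G', ha, hb, hc', hd⟩ := step h' W hW h0 m ρ c hρ h1 h2 n G hG
    exact ⟨⟨(n', G'), hc'⟩, ha, hb, hd⟩
  choose f hf1 hf2 hf3 using hstep
  let s : ℕ → {p : ℕ × Finset ℤ // Lev N B W p.1 p.2} := fun k =>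
    f^[k + 1] ⟨(0, {0}), Lev.single N B W 0⟩
  have hs : ∀ k, s (k + 1) = f (s k) := fun k => Function.iterate_succ_apply' f _ _
  have hgood : ∀ k, GoodG N μ W ρ c (s k).1.1 (s k).1.2 := by
    intro k
    have : s k = f (f^[k] ⟨(0, {0}), Lev.single N B W 0⟩) := Function.iterate_succ_apply' f _ _
    rw [this]
    exact hf3 _
  have hmn : StrictMono fun k => (s k).1.1 := strictMono_nat_of_lt_succ fun k => by
    rw [hs]; exact hf1 _
  have hmG : Monotone fun k => (s k).1.2 := monotone_nat_of_le_succ fun k => by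
    rw [hs]; exact hf2 _
  have hspec : ∀ w ∈ W, IsSpectrum μ
      ((fun g : ℤ => (w : ℝ) * g) '' ⋃ k, ((s k).1.2 : Set ℤ)) := by
    intro w hw
    refine spectrum_of_parseval μ w (hWp w hw) (fun k => (s k).1.2) ?_ ?_
    · intro g hg g' hg' hne
      obtain ⟨k, hk⟩ := Set.mem_iUnion.mp hg
      obtain ⟨k', hk'⟩ := Set.mem_iUnion.mp hg'
      have e1 : g ∈ (s (max k k')).1.2 := hmG (le_max_left k k') hk
      have e2 : g' ∈ (s (max k k')).1.2 := hmG (le_max_right k k') hk'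
      rw [phi_eq_PB hN2 hμ (s (max k k')).1.1, (s (max k k')).2.orth hB hw e1 e2 hne, zero_mul]
    · exact parseval hN2 hμ W ρ c hρ hc (fun k => (s k).1.1) hmn (fun k => (s k).1.2) hmG
        (fun k => (s k).2) hgood w hw
  refine ⟨_, hspec u huW, ?_⟩
  rw [Set.image_image]
  have hu0 : (u : ℝ) ≠ 0 := by exact_mod_cast hu.ne'
  have himg : (fun x : ℤ => ((v : ℝ) / (u : ℝ)) * ((u : ℝ) * (x : ℝ))) =
      fun g : ℤ => (v : ℝ) * (g : ℝ) := by
    funext g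
    field_simp
  have hfin := hspec v hvW
  rw [← himg] at hfin
  exact hfin
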